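/- Let (Γ,+,d) be a metric Abelian monoid, 𝛿(x,y) := lim_{k→∞} (1/k)·d(k•x, k•y) the induced homogeneous pseudometric, and φ a positive admissible function. Then the d-quasi-linear sequences are dense among the 𝛿-quasi-linear sequences with respect to the asymptotic distance: for every sequence γ̄ that is quasi-linear with respect to 𝛿 with defect bounded by a multiple of φ, and every ε > 0, there exist i ∈ ℕ and the sequence γ̄ᵢ defined by γᵢ(n) := ⌊n/i⌋•γ(i), which is quasi-linear with respect to d with defect bounded by a multiple of φ, such that lim_{n→∞} (1/n)·𝛿(γᵢ(n), γ(n)) < ε. -/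

import Mathlib

/-!
For `T s = ∫_s^∞ φ(t)/t² dt`, monotonicity of `φ` gives `φ s ≤ 2 s (T s - T (2 s))`. Comparing
`q • γ n` with `γ (q n)` by repeatedly halving `q` adds a defect of at most `2 φ(q n)` to twice the
previous error at each stage, and by the inequality above these defects telescope to the bound
`4 q n T(n)`. Hence `n ↦ ⌊n/i⌋ • γ i` is at asymptotic distance at most `4 T(i)` from `γ`, and
`T(i) → 0`. The sequence `n ↦ ⌊n/i⌋ • x` has bounded defect with respect to every pseudometric for
which addition is 1-Lipschitz, because `⌊(m + n)/i⌋` differs from `⌊m/i⌋ + ⌊n/i⌋` by at most one.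
-/

open MeasureTheory Filter

/-- A pseudometric on `Γ`: reflexive-zero, symmetric, triangle inequality. -/
def IsPseudoMetric {Γ : Type*} (d : Γ → Γ → ℝ) : Prop :=
  (∀ x, d x x = 0) ∧ (∀ x y, d x y = d y x) ∧ (∀ x y z, d x z ≤ d x y + d y z)

/-- A metric Abelian monoid: an additive commutative monoid with a pseudometric
for which addition is 1-Lipschitz in each argument. -/
def IsMetricAbelianMonoid {Γ : Type*} [AddCommMonoid Γ] (d : Γ → Γ → ℝ) : Prop :=
  IsPseudoMetric d ∧ ∀ a b c : Γ, d (a + b) (a + c) ≤ d b c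

/-- `φ : [1,∞) → [0,∞)` is admissible with constant `D ≥ 0`: non-decreasing,
summable against `dt/t²`, and `s·∫_s^∞ φ(t)/t² dt ≤ (D/8)·φ(s)` for all `s ≥ 1`. -/
def AdmissibleWith (φ : ℝ → ℝ) (D : ℝ) : Prop :=
  (∀ t, 1 ≤ t → 0 ≤ φ t) ∧ MonotoneOn φ (Set.Ici 1) ∧ 0 ≤ D ∧
  (∀ s, 1 ≤ s → IntegrableOn (fun t => φ t / t ^ 2) (Set.Ioi s)) ∧
  (∀ s, 1 ≤ s → s * ∫ t in Set.Ioi s, φ t / t ^ 2 ≤ D / 8 * φ s)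

def Admissible (φ : ℝ → ℝ) : Prop := ∃ D, AdmissibleWith φ D

/-- A sequence `γ : ℕ → Γ` is quasi-linear with defect bounded by `φ`
(with respect to the pseudometric `d`). -/
def QuasiLinear {Γ : Type*} [AddCommMonoid Γ] (d : Γ → Γ → ℝ) (φ : ℝ → ℝ)
    (γ : ℕ → Γ) : Prop :=
  γ 0 = 0 ∧ ∀ m n : ℕ, 1 ≤ m → 1 ≤ n →
    d (γ (m + n)) (γ m + γ n) ≤ φ ((m + n : ℕ) : ℝ)

/-- The asymptotic distance `lim_{n→∞} d(γ₁(n),γ₂(n))/n`, realized as a `limsup`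
(for quasi-linear sequences the limit exists, so this is that limit). -/
noncomputable def dista {Γ : Type*} (d : Γ → Γ → ℝ) (γ₁ γ₂ : ℕ → Γ) : ℝ :=
  Filter.limsup (fun n : ℕ => d (γ₁ n) (γ₂ n) / n) Filter.atTop

section InverseSquareTail

/-- The tail `∫_s^∞ φ(t)/t² dt` from the definition of admissibility; up to a constant factor it
bounds the asymptotic distance of a quasi-linear sequence with defect `φ` to its approximations. -/
noncomputable def inverseSquareTail (φ : ℝ → ℝ) (s : ℝ) : ℝ :=
  ∫ t in Set.Ioi s, φ t / t ^ 2

variable {φ : ℝ → ℝ} {a : ℝ}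

theorem inverseSquareTail_nonneg (hpos : ∀ t, a ≤ t → 0 ≤ φ t) : 0 ≤ inverseSquareTail φ a :=
  setIntegral_nonneg measurableSet_Ioi fun t ht => div_nonneg (hpos t ht.le) (sq_nonneg t)

theorem antitoneOn_inverseSquareTail (hpos : ∀ t, a ≤ t → 0 ≤ φ t)
    (hint : IntegrableOn (fun t => φ t / t ^ 2) (Set.Ioi a)) :
    AntitoneOn (inverseSquareTail φ) (Set.Ici a) := fun _ hs _ _ hst =>
  setIntegral_mono_set (hint.mono_set (Set.Ioi_subset_Ioi hs))
    (ae_restrict_of_forall_mem measurableSet_Ioi fun u hu =>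
      div_nonneg (hpos u (le_trans hs (le_of_lt hu))) (sq_nonneg u))
    (Set.Ioi_subset_Ioi hst).eventuallyLE

theorem tendsto_inverseSquareTail_atTop (φ : ℝ → ℝ) :
    Tendsto (inverseSquareTail φ) atTop (nhds 0) :=
  tendsto_integral_Ioi_zero tendsto_id

theorem integral_inv_sq_two_mul (ha : 0 < a) : ∫ t in a..2 * a, (t ^ 2)⁻¹ = (2 * a)⁻¹ := by
  have hzero : (0 : ℝ) ∉ Set.uIcc a (2 * a) := by
    rw [Set.uIcc_of_le (by linarith)]
    exact fun h => ha.not_ge h.1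
  calc ∫ t in a..2 * a, (t ^ 2)⁻¹ = ∫ t in a..2 * a, t ^ (-2 : ℤ) := by
        simp only [zpow_neg, zpow_ofNat]
    _ = ((2 * a) ^ (-2 + 1 : ℤ) - a ^ (-2 + 1 : ℤ)) / ((-2 : ℤ) + 1) :=
        integral_zpow (Or.inr ⟨by norm_num, hzero⟩)
    _ = (2 * a)⁻¹ := by
        rw [show (-2 + 1 : ℤ) = -1 by norm_num, zpow_neg_one, zpow_neg_one]
        field_simp
        norm_num

theorem le_two_mul_inverseSquareTail_sub (ha : 0 < a) (hmono : MonotoneOn φ (Set.Ici a))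
    (hint : IntegrableOn (fun t => φ t / t ^ 2) (Set.Ioi a)) :
    φ a ≤ 2 * a * (inverseSquareTail φ a - inverseSquareTail φ (2 * a)) := by
  have hle : a ≤ 2 * a := by linarith
  have hconst : IntervalIntegrable (fun t => φ a * (t ^ 2)⁻¹) volume a (2 * a) := by
    refine ContinuousOn.intervalIntegrable (continuousOn_const.mul
      ((continuousOn_id.pow 2).inv₀ fun t ht => ?_))
    rw [Set.uIcc_of_le hle] at ht
    exact pow_ne_zero 2 (ha.trans_le ht.1).ne'
  have hφ : IntervalIntegrable (fun t => φ t / t ^ 2) volume a (2 * a) :=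
    (intervalIntegrable_iff_integrableOn_Ioc_of_le hle).2
      (hint.mono_set Set.Ioc_subset_Ioi_self)
  have hdiv : φ a / (2 * a) ≤ inverseSquareTail φ a - inverseSquareTail φ (2 * a) :=
    calc φ a / (2 * a) = ∫ t in a..2 * a, φ a * (t ^ 2)⁻¹ := by
          rw [intervalIntegral.integral_const_mul, integral_inv_sq_two_mul ha, div_eq_mul_inv]
      _ ≤ ∫ t in a..2 * a, φ t / t ^ 2 :=
          intervalIntegral.integral_mono_on hle hconst hφ fun t ht => by
            rw [div_eq_mul_inv]
            exact mul_le_mul_of_nonneg_right (hmono Set.self_mem_Ici ht.1 ht.1) (by positivity)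
      _ = inverseSquareTail φ a - inverseSquareTail φ (2 * a) :=
          (intervalIntegral.integral_Ioi_sub_Ioi hint hle).symm
  rwa [div_le_iff₀' (by positivity)] at hdiv

theorem le_two_mul_inverseSquareTail (ha : 0 < a) (hpos : ∀ t, a ≤ t → 0 ≤ φ t)
    (hmono : MonotoneOn φ (Set.Ici a))
    (hint : IntegrableOn (fun t => φ t / t ^ 2) (Set.Ioi a)) :
    φ a ≤ 2 * a * inverseSquareTail φ a := by
  refine (le_two_mul_inverseSquareTail_sub ha hmono hint).trans
    (mul_le_mul_of_nonneg_left (sub_le_self _ ?_) (by positivity))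
  exact inverseSquareTail_nonneg fun t ht => hpos t (by linarith)

theorem two_mul_inverseSquareTail_sub_add_le {s t : ℝ} (ha : 0 < a)
    (hpos : ∀ u, a ≤ u → 0 ≤ φ u) (hmono : MonotoneOn φ (Set.Ici a))
    (hint : IntegrableOn (fun u => φ u / u ^ 2) (Set.Ioi a)) (has : a ≤ s) (hst : 2 * s ≤ t) :
    2 * (4 * s * (inverseSquareTail φ a - inverseSquareTail φ (2 * s))) + 2 * φ t ≤
      4 * t * (inverseSquareTail φ a - inverseSquareTail φ (2 * t)) := by
  have hanti := antitoneOn_inverseSquareTail hpos hint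
  have hat : a ≤ t := by linarith
  have hdefect := le_two_mul_inverseSquareTail_sub (ha.trans_le hat)
    (hmono.mono (Set.Ici_subset_Ici.2 hat)) (hint.mono_set (Set.Ioi_subset_Ioi hat))
  have hhalf : 4 * (2 * s) * (inverseSquareTail φ a - inverseSquareTail φ (2 * s)) ≤
      4 * t * (inverseSquareTail φ a - inverseSquareTail φ t) := by
    have h2s : a ≤ 2 * s := by linarith
    have hle_t := hanti h2s hat hst
    exact mul_le_mul (by linarith) (by linarith)
      (sub_nonneg.2 (hanti Set.self_mem_Ici h2s h2s)) (by linarith)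
  linarith

theorem tendsto_div_atTop_zero_of_integrableOn_div_sq (hpos : ∀ t, a ≤ t → 0 ≤ φ t)
    (hmono : MonotoneOn φ (Set.Ici a))
    (hint : IntegrableOn (fun t => φ t / t ^ 2) (Set.Ioi a)) :
    Tendsto (fun t => φ t / t) atTop (nhds 0) := by
  have htail := (tendsto_inverseSquareTail_atTop φ).const_mul 2
  rw [mul_zero] at htail
  refine squeeze_zero' ?_ ?_ htail
  · filter_upwards [eventually_ge_atTop a, eventually_ge_atTop 0] with t hat ht
    exact div_nonneg (hpos t hat) ht
  · filter_upwards [eventually_ge_atTop a, eventually_gt_atTop 0] with t hat ht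
    rw [div_le_iff₀ ht, mul_right_comm]
    exact le_two_mul_inverseSquareTail ht (fun u hu => hpos u (hat.trans hu))
      (hmono.mono (Set.Ici_subset_Ici.2 hat)) (hint.mono_set (Set.Ioi_subset_Ioi hat))

end InverseSquareTail

section MetricAbelianMonoid

theorem IsPseudoMetric.nonneg {Γ : Type*} {d : Γ → Γ → ℝ} (h : IsPseudoMetric d) (x y : Γ) :
    0 ≤ d x y := by
  obtain ⟨hself, hsymm, htri⟩ := h
  have hxyx := htri x y x
  rw [hself, hsymm y x] at hxyx
  linarith

variable {Γ : Type*} [AddCommMonoid Γ] {d δ : Γ → Γ → ℝ}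

theorem IsMetricAbelianMonoid.dist_add_add_le (h : IsMetricAbelianMonoid d) (x x' y y' : Γ) :
    d (x + x') (y + y') ≤ d x y + d x' y' :=
  calc d (x + x') (y + y') ≤ d (x + x') (y + x') + d (y + x') (y + y') := h.1.2.2 _ _ _
    _ ≤ d x y + d x' y' := by
        rw [add_comm x x', add_comm y x']
        exact add_le_add (h.2 x' x y) (by rw [add_comm x' y]; exact h.2 y x' y')

theorem IsMetricAbelianMonoid.of_tendsto_nsmul_div (h : IsMetricAbelianMonoid d)
    (hδ : ∀ x y : Γ, Tendsto (fun k : ℕ => d (k • x) (k • y) / k) atTop (nhds (δ x y))) :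
    IsMetricAbelianMonoid δ := by
  obtain ⟨⟨hself, hsymm, htri⟩, hadd⟩ := h
  refine ⟨⟨fun x => ?_, fun x y => ?_, fun x y z => ?_⟩, fun a b c => ?_⟩
  · exact tendsto_nhds_unique (hδ x x) (by simp [hself])
  · refine tendsto_nhds_unique (hδ x y) ((hδ y x).congr fun k => ?_)
    rw [hsymm]
  · refine le_of_tendsto_of_tendsto' (hδ x z) ((hδ x y).add (hδ y z)) fun k => ?_
    rw [← add_div]
    exact div_le_div_of_nonneg_right (htri _ _ _) k.cast_nonneg
  · refine le_of_tendsto_of_tendsto' (hδ _ _) (hδ b c) fun k => ?_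
    rw [smul_add, smul_add]
    exact div_le_div_of_nonneg_right (hadd _ _ _) k.cast_nonneg

theorem IsMetricAbelianMonoid.quasiLinear_div_nsmul (h : IsMetricAbelianMonoid d) {i : ℕ}
    (hi : 0 < i) (x : Γ) : QuasiLinear d (fun _ => d x 0) (fun n => (n / i) • x) := by
  refine ⟨by simp, fun m n _ _ => ?_⟩
  dsimp only
  rw [← add_smul, Nat.add_div hi]
  split_ifs
  · simpa only [add_smul, one_smul, add_zero] using h.2 ((m / i + n / i) • x) x 0
  · rw [add_zero, h.1.1]
    exact h.1.nonneg x 0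

end MetricAbelianMonoid

namespace QuasiLinear

variable {Γ : Type*} [AddCommMonoid Γ] {d : Γ → Γ → ℝ} {φ ψ : ℝ → ℝ} {γ : ℕ → Γ}

theorem mono (hγ : QuasiLinear d φ γ) (hφψ : ∀ t, 1 ≤ t → φ t ≤ ψ t) : QuasiLinear d ψ γ :=
  ⟨hγ.1, fun m n hm hn =>
    (hγ.2 m n hm hn).trans (hφψ _ (Nat.one_le_cast.2 (hm.trans (Nat.le_add_right m n))))⟩

theorem defect_nonneg (h : IsPseudoMetric d) (hγ : QuasiLinear d φ γ) {n : ℕ} (hn : 2 ≤ n) :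
    0 ≤ φ n := by
  obtain ⟨m, rfl⟩ := Nat.exists_eq_add_of_le' hn
  exact (h.nonneg _ _).trans (hγ.2 (m + 1) 1 (by omega) le_rfl)

theorem defect_nonneg_of_monotoneOn (h : IsPseudoMetric d) (hγ : QuasiLinear d φ γ) {n : ℕ}
    (hn : 2 ≤ n) (hmono : MonotoneOn φ (Set.Ici n)) (t : ℝ) (ht : n ≤ t) : 0 ≤ φ t :=
  (hγ.defect_nonneg h hn).trans (hmono Set.self_mem_Ici ht ht)

theorem dist_add_nsmul_le (h : IsMetricAbelianMonoid d) (hγ : QuasiLinear d φ γ) {n p q : ℕ}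
    (hn : 0 < n) (hp : 0 < p) (hq : 0 < q) :
    d ((p + q) • γ n) (γ ((p + q) * n)) ≤
      d (p • γ n) (γ (p * n)) + d (q • γ n) (γ (q * n)) + φ (((p + q) * n : ℕ) : ℝ) := by
  rw [add_smul, add_mul]
  calc d (p • γ n + q • γ n) (γ (p * n + q * n))
      ≤ d (p • γ n + q • γ n) (γ (p * n) + γ (q * n)) +
          d (γ (p * n) + γ (q * n)) (γ (p * n + q * n)) := h.1.2.2 _ _ _
    _ ≤ d (p • γ n) (γ (p * n)) + d (q • γ n) (γ (q * n)) +
          φ ((p * n + q * n : ℕ) : ℝ) := by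
        rw [h.1.2.1 (γ (p * n) + γ (q * n))]
        exact add_le_add (h.dist_add_add_le _ _ _ _)
          (hγ.2 _ _ (Nat.mul_pos hp hn) (Nat.mul_pos hq hn))

theorem dist_nsmul_le_half (h : IsMetricAbelianMonoid d) (hγ : QuasiLinear d φ γ) {n q : ℕ}
    (hn : 0 < n) (hq : 2 ≤ q) (hmono : MonotoneOn φ (Set.Ici n)) :
    d (q • γ n) (γ (q * n)) ≤
      2 * d ((q / 2) • γ n) (γ (q / 2 * n)) + 2 * φ ((q * n : ℕ) : ℝ) := by
  have hk : 0 < q / 2 := Nat.div_pos hq two_pos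
  have hdouble := hγ.dist_add_nsmul_le h hn hk hk
  rw [← two_mul, ← two_mul] at hdouble
  rcases Nat.even_or_odd q with heven | hodd
  · rw [Nat.two_mul_div_two_of_even heven] at hdouble
    have hdefect := hγ.defect_nonneg h.1 (hq.trans (Nat.le_mul_of_pos_right q hn))
    linarith
  · have hsucc := hγ.dist_add_nsmul_le h hn (Nat.mul_pos two_pos hk) one_pos
    rw [Nat.two_mul_div_two_add_one_of_odd hodd, one_smul, one_mul, h.1.1, add_zero] at hsucc
    have hφ : φ ((2 * (q / 2) * n : ℕ) : ℝ) ≤ φ ((q * n : ℕ) : ℝ) :=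
      hmono (Set.mem_Ici.2 (Nat.cast_le.2 (Nat.le_mul_of_pos_left n (by omega))))
        (Set.mem_Ici.2 (Nat.cast_le.2 (Nat.le_mul_of_pos_left n (by omega))))
        (Nat.cast_le.2 (Nat.mul_le_mul_right n (Nat.mul_div_le q 2)))
    linarith

theorem dist_nsmul_le (h : IsMetricAbelianMonoid d) (hγ : QuasiLinear d φ γ) {n : ℕ}
    (hn : 2 ≤ n) (hmono : MonotoneOn φ (Set.Ici n))
    (hint : IntegrableOn (fun t => φ t / t ^ 2) (Set.Ioi n)) (q : ℕ) :
    d (q • γ n) (γ (q * n)) ≤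
      4 * (q * n : ℕ) * (inverseSquareTail φ n - inverseSquareTail φ (2 * (q * n : ℕ))) := by
  have hn0 : 0 < n := by omega
  have hnR : (0 : ℝ) < n := Nat.cast_pos.2 hn0
  have hpos := hγ.defect_nonneg_of_monotoneOn h.1 hn hmono
  induction q using Nat.strong_induction_on with
  | h q ih =>
    obtain rfl | rfl | hq : q = 0 ∨ q = 1 ∨ 2 ≤ q := by omega
    · simp [hγ.1, h.1.1]
    · have hle : (n : ℝ) ≤ 2 * n := by linarith
      have htail := antitoneOn_inverseSquareTail hpos hint Set.self_mem_Ici hle hle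
      simpa [h.1.1] using mul_nonneg (by positivity) (sub_nonneg.2 htail)
    · have hhalf : (n : ℝ) ≤ (q / 2 * n : ℕ) :=
        Nat.cast_le.2 (Nat.le_mul_of_pos_left n (Nat.div_pos hq two_pos))
      have hdouble : 2 * ((q / 2 * n : ℕ) : ℝ) ≤ (q * n : ℕ) := by
        rw [← Nat.cast_two, ← Nat.cast_mul, ← mul_assoc]
        exact Nat.cast_le.2 (Nat.mul_le_mul_right n (Nat.mul_div_le q 2))
      calc d (q • γ n) (γ (q * n))
          ≤ 2 * d ((q / 2) • γ n) (γ (q / 2 * n)) + 2 * φ ((q * n : ℕ) : ℝ) :=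
            hγ.dist_nsmul_le_half h hn0 hq hmono
        _ ≤ 2 * (4 * (q / 2 * n : ℕ) * (inverseSquareTail φ n -
              inverseSquareTail φ (2 * (q / 2 * n : ℕ)))) + 2 * φ ((q * n : ℕ) : ℝ) := by
            gcongr
            exact ih (q / 2) (Nat.div_lt_self (by omega) one_lt_two)
        _ ≤ 4 * (q * n : ℕ) *
              (inverseSquareTail φ n - inverseSquareTail φ (2 * (q * n : ℕ))) :=
            two_mul_inverseSquareTail_sub_add_le hnR hpos hmono hint hhalf hdouble

theorem dist_add_le (h : IsMetricAbelianMonoid d) (hγ : QuasiLinear d φ γ) {m : ℕ} (hm : 2 ≤ m)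
    (r : ℕ) : d (γ m) (γ (m + r)) ≤ φ ((m + r : ℕ) : ℝ) + d (γ r) 0 := by
  have ⟨⟨hself, hsymm, htri⟩, hadd⟩ := h
  rcases r.eq_zero_or_pos with rfl | hr
  · rw [add_zero, hself]
    exact add_nonneg (hγ.defect_nonneg h.1 hm) (h.1.nonneg _ _)
  · have hdefect := hγ.2 m r (by omega) hr
    have hshift := hadd (γ m) (γ r) 0
    rw [add_zero] at hshift
    have hvia := htri (γ (m + r)) (γ m + γ r) (γ m)
    rw [hsymm (γ m)]
    linarith

theorem exists_dist_div_nsmul_le (h : IsMetricAbelianMonoid d) (hγ : QuasiLinear d φ γ) {i : ℕ}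
    (hi : 2 ≤ i) (hmono : MonotoneOn φ (Set.Ici i))
    (hint : IntegrableOn (fun t => φ t / t ^ 2) (Set.Ioi i)) :
    ∃ M, ∀ n, i ≤ n →
      d ((n / i) • γ i) (γ n) ≤ 4 * n * inverseSquareTail φ i + φ n + M := by
  have hpos := hγ.defect_nonneg_of_monotoneOn h.1 hi hmono
  refine ⟨∑ r ∈ Finset.range i, d (γ r) 0, fun n hin => ?_⟩
  set q := n / i
  set r := n % i
  have hqr : q * i + r = n := Nat.div_add_mod' n i
  have hq : 0 < q := Nat.div_pos hin (by omega)
  have hmain : d (q • γ i) (γ (q * i)) ≤ 4 * n * inverseSquareTail φ i := by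
    refine (hγ.dist_nsmul_le h hi hmono hint q).trans ?_
    have htail : 0 ≤ inverseSquareTail φ (2 * (q * i : ℕ)) := by
      have hiqi : (i : ℝ) ≤ (q * i : ℕ) := Nat.cast_le.2 (Nat.le_mul_of_pos_left i hq)
      exact inverseSquareTail_nonneg fun t ht => hpos t (by linarith [i.cast_nonneg (α := ℝ)])
    have hqi : ((q * i : ℕ) : ℝ) ≤ n := Nat.cast_le.2 (Nat.div_mul_le_self n i)
    calc _ ≤ 4 * (q * i : ℕ) * inverseSquareTail φ i :=
          mul_le_mul_of_nonneg_left (sub_le_self _ htail) (by positivity)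
      _ ≤ 4 * n * inverseSquareTail φ i :=
          mul_le_mul_of_nonneg_right (by linarith) (inverseSquareTail_nonneg hpos)
  have hrest : d (γ (q * i)) (γ n) ≤ φ n + d (γ r) 0 := by
    simpa only [hqr] using hγ.dist_add_le h (hi.trans (Nat.le_mul_of_pos_left i hq)) r
  have hr : d (γ r) 0 ≤ ∑ r ∈ Finset.range i, d (γ r) 0 :=
    Finset.single_le_sum (f := fun r => d (γ r) 0) (fun r _ => h.1.nonneg _ _)
      (Finset.mem_range.2 (Nat.mod_lt n (by omega)))
  linarith [h.1.2.2 (q • γ i) (γ (q * i)) (γ n)]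

theorem dista_div_nsmul_le (h : IsMetricAbelianMonoid d) (hγ : QuasiLinear d φ γ) {i : ℕ}
    (hi : 2 ≤ i) (hmono : MonotoneOn φ (Set.Ici i))
    (hint : IntegrableOn (fun t => φ t / t ^ 2) (Set.Ioi i)) :
    dista d (fun n => (n / i) • γ i) γ ≤ 4 * inverseSquareTail φ i := by
  obtain ⟨M, hM⟩ := hγ.exists_dist_div_nsmul_le h hi hmono hint
  have hφ : Tendsto (fun n : ℕ => φ n / n) atTop (nhds 0) :=
    (tendsto_div_atTop_zero_of_integrableOn_div_sq
      (hγ.defect_nonneg_of_monotoneOn h.1 hi hmono) hmono hint).comp tendsto_natCast_atTop_atTop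
  have hlim : Tendsto (fun n : ℕ => 4 * inverseSquareTail φ i + φ n / n + M / n) atTop
      (nhds (4 * inverseSquareTail φ i)) := by
    simpa only [add_zero] using
      (hφ.const_add _).add (tendsto_const_div_atTop_nhds_zero_nat M)
  have hbound : (fun n : ℕ => d ((n / i) • γ i) (γ n) / n) ≤ᶠ[atTop]
      fun n : ℕ => 4 * inverseSquareTail φ i + φ n / n + M / n := by
    filter_upwards [eventually_ge_atTop i] with n hin
    have hn : (0 : ℝ) < n := Nat.cast_pos.2 (by omega)
    calc d ((n / i) • γ i) (γ n) / n
        ≤ (4 * n * inverseSquareTail φ i + φ n + M) / n :=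
          div_le_div_of_nonneg_right (hM n hin) hn.le
      _ = 4 * inverseSquareTail φ i + φ n / n + M / n := by field_simp
  have hcobdd : IsCoboundedUnder (· ≤ ·) atTop
      (fun n : ℕ => d ((n / i) • γ i) (γ n) / n) :=
    IsCoboundedUnder.of_frequently_ge (a := 0)
      (Frequently.of_forall fun n => div_nonneg (h.1.nonneg _ _) n.cast_nonneg)
  exact (limsup_le_limsup hbound hcobdd hlim.isBoundedUnder_le).trans_eq hlim.limsup_eq

end QuasiLinear

theorem d_qlin_dense_in_delta_qlin_general {Γ : Type*} [AddCommMonoid Γ] {d δ : Γ → Γ → ℝ}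
    (hd : IsMetricAbelianMonoid d) (hδ : IsMetricAbelianMonoid δ) {φ : ℝ → ℝ} {a : ℝ}
    (hmono : MonotoneOn φ (Set.Ici a))
    (hint : IntegrableOn (fun t => φ t / t ^ 2) (Set.Ioi a))
    {γ : ℕ → Γ} (hγ : QuasiLinear δ φ γ) {ε : ℝ} (hε : 0 < ε) :
    ∃ i : ℕ, 1 ≤ i ∧
      QuasiLinear d (fun _ => d (γ i) 0) (fun n : ℕ => (n / i) • γ i) ∧
      dista δ (fun n : ℕ => (n / i) • γ i) γ < ε := by
  have htail : Tendsto (fun i : ℕ => 4 * inverseSquareTail φ i) atTop (nhds 0) := by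
    simpa only [mul_zero, Function.comp_apply] using
      ((tendsto_inverseSquareTail_atTop φ).comp tendsto_natCast_atTop_atTop).const_mul 4
  obtain ⟨i, hiε, hi, hai⟩ := ((htail.eventually_lt_const hε).and
    ((eventually_ge_atTop 2).and (tendsto_natCast_atTop_atTop.eventually_ge_atTop a))).exists
  exact ⟨i, by omega, hd.quasiLinear_div_nsmul (by omega) (γ i),
    (hγ.dista_div_nsmul_le hδ hi (hmono.mono (Set.Ici_subset_Ici.2 hai))
      (hint.mono_set (Set.Ioi_subset_Ioi hai))).trans_lt hiε⟩

/-- The `d`-quasi-linear sequences are dense among the `𝛿`-quasi-linear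
sequences with respect to the asymptotic distance: any `𝛿`-quasi-linear
sequence `γ` is approximated by the sequences `n ↦ ⌊n/i⌋ • γ i`. -/
theorem d_qlin_dense_in_delta_qlin {Γ : Type*} [AddCommMonoid Γ]
    (d : Γ → Γ → ℝ) (h : IsMetricAbelianMonoid d)
    (δ : Γ → Γ → ℝ)
    (hδ : ∀ x y : Γ, Filter.Tendsto (fun k : ℕ => d (k • x) (k • y) / k)
      Filter.atTop (nhds (δ x y)))
    (φ : ℝ → ℝ) (hφ : Admissible φ) (hφpos : ∀ t : ℝ, 1 ≤ t → 0 < φ t)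
    (C : ℝ) (hC : 0 ≤ C)
    (γ : ℕ → Γ) (hγ : QuasiLinear δ (fun t => C * φ t) γ)
    (ε : ℝ) (hε : 0 < ε) :
    ∃ i : ℕ, 1 ≤ i ∧
      (∃ Ci ≥ (0 : ℝ), QuasiLinear d (fun t => Ci * φ t) (fun n : ℕ => (n / i) • γ i)) ∧
      dista δ (fun n : ℕ => (n / i) • γ i) γ < ε := by
  obtain ⟨_, _, hmono, _, hint, _⟩ := hφ
  have hintC : IntegrableOn (fun t => C * φ t / t ^ 2) (Set.Ioi 1) := by
    simpa only [IntegrableOn, mul_div_assoc] using (hint 1 le_rfl).const_mul C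
  have hmonoC : MonotoneOn (fun t => C * φ t) (Set.Ici 1) := fun _ hs _ ht hst =>
    mul_le_mul_of_nonneg_left (hmono hs ht hst) hC
  obtain ⟨i, hi, hqlin, hdist⟩ := d_qlin_dense_in_delta_qlin_general h
    (h.of_tendsto_nsmul_div hδ) hmonoC hintC hγ hε
  have hφ1 : 0 < φ 1 := hφpos 1 le_rfl
  refine ⟨i, hi, ⟨d (γ i) 0 / φ 1, div_nonneg (h.1.nonneg _ _) hφ1.le,
    hqlin.mono fun t ht => ?_⟩, hdist⟩
  rw [div_mul_eq_mul_div, le_div_iff₀ hφ1]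
  exact mul_le_mul_of_nonneg_left (hmono Set.self_mem_Ici ht ht) (h.1.nonneg _ _)
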